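/- As p → ∞, μ_{2,p}(full) is asymptotically equal to (π√2 / (24 · p^{3/2})) · exp(π·(2p/3)^{1/2}); that is, the ratio of μ_{2,p}(full) to this expression tends to 1 as p → ∞. -/

import Mathlib

/-!
The number `muFull 2 p` is the number of partitions of `p` into parts at least `2`. Indeed a
double-covering by 2-sets is the edge multiset of a loopless 2-regular multigraph, that is
`{i, σ i}` for a permutation `σ` without fixed points of the index set (`exists_coll`, through Hall's
theorem), and two of these are isomorphic exactly when the permutations have the same cycle type,
because the cycles are recovered as the connected components (`sizes_coll`,
`sizes_eq_of_isomorphic`); this gives `muFull_two`.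

The generating function of these partitions is `genF q = ∏_{n ≥ 2} (1 - q ^ n)⁻¹` (`hasSum_rp`). Its
coefficients are estimated by the saddle point method applied to Cauchy's formula `rp_integral` on
`|q| = e ^ (-t)` with `t = π / √(6 n)`:

* the transformation of Dedekind's `η` under `τ ↦ -1 / τ` gives
  `genF (e ^ (-z)) ∼ t ^ (3/2) e ^ (π ^ 2 / (6 z)) / √(2 π)` when `z ∼ t → 0⁺` (`tendsto_genF`);
* after the substitution `θ = t ^ (3/2) u` the integrand divided by its value at `θ = 0` tends to
  `e ^ (-π ^ 2 u ^ 2 / 6)` (`tendsto_scaled`);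
* comparing the factors of the product with their values at `|q|` bounds the integrand by a multiple
  of `1 / (1 + u ^ 2)` on the whole circle (`exists_bound`), so no separate treatment of minor arcs is
  needed and dominated convergence applies (`tendsto_integral_scaled`).

The Gaussian integral is `√(6 / π)`, and `rp n ∼ t ^ 3 √(6 / π) (2 π) ^ (-3/2) e ^ (π ^ 2 / (3 t))` is
the stated formula.
-/

/-- The union of all member sets of a set-collection. -/
def unionC (C : Multiset (Finset ℕ)) : Finset ℕ := C.sup

/-- A set-collection is a double-covering if every point of its union lies in
exactly two member sets (counted with multiplicity). -/
def IsDoubleCover (C : Multiset (Finset ℕ)) : Prop :=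
  ∀ a ∈ unionC C, Multiset.countP (fun A => a ∈ A) C = 2

/-- A set-collection is an even-covering if every point of its union lies in an
even number of member sets (counted with multiplicity). -/
def IsEvenCover (C : Multiset (Finset ℕ)) : Prop :=
  ∀ a ∈ unionC C, Even (Multiset.countP (fun A => a ∈ A) C)

/-- Two set-collections are isomorphic: there is a bijection between their
unions mapping the first multiset of sets onto the second. -/
def Isomorphic (C D : Multiset (Finset ℕ)) : Prop :=
  ∃ φ : ℕ → ℕ, Set.BijOn φ ↑(unionC C) ↑(unionC D) ∧
    C.map (Finset.image φ) = D

/-- A set-collection is connected if any two member sets are joined by a chain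
of member sets with consecutive nonempty intersections. -/
def ConnectedColl (C : Multiset (Finset ℕ)) : Prop :=
  ∀ A ∈ C, ∀ B ∈ C,
    Relation.ReflTransGen (fun X Y => X ∈ C ∧ Y ∈ C ∧ (X ∩ Y).Nonempty) A B

/-- `D` is a connected component of `C`: a nonempty connected sub-multiset
separated from the rest of `C`. -/
def IsComponent (C D : Multiset (Finset ℕ)) : Prop :=
  D ≤ C ∧ D ≠ 0 ∧ ConnectedColl D ∧ ∀ B ∈ C - D, ∀ A ∈ D, B ∩ A = ∅

/-- A set-collection is standard if no two of its distinct connected components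
are isomorphic. -/
def IsStandard (C : Multiset (Finset ℕ)) : Prop :=
  ∀ D E : Multiset (Finset ℕ),
    IsComponent C D → IsComponent C E → D ≠ E → ¬ Isomorphic D E

/-- `μ_{l,p}(full)`: the number of isomorphism classes of double-coverings of
`p` sets each of cardinality `l`. -/
noncomputable def muFull (l p : ℕ) : ℕ :=
  Nat.card (Quot (fun C D : {C : Multiset (Finset ℕ) //
      Multiset.card C = p ∧ IsDoubleCover C ∧ ∀ A ∈ C, A.card = l} =>
    Isomorphic C.1 D.1))

/-- `μ_{l,p}(standard)`: the number of isomorphism classes of standard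
double-coverings of `p` sets each of cardinality `l`. -/
noncomputable def muStandard (l p : ℕ) : ℕ :=
  Nat.card (Quot (fun C D : {C : Multiset (Finset ℕ) //
      Multiset.card C = p ∧ IsDoubleCover C ∧ IsStandard C ∧ ∀ A ∈ C, A.card = l} =>
    Isomorphic C.1 D.1))

/-- `μ*_{l,p}(full)`: the number of isomorphism classes of double-coverings of
`p` sets each of cardinality between `1` and `l`. -/
noncomputable def muStarFull (l p : ℕ) : ℕ :=
  Nat.card (Quot (fun C D : {C : Multiset (Finset ℕ) //
      Multiset.card C = p ∧ IsDoubleCover C ∧ ∀ A ∈ C, 1 ≤ A.card ∧ A.card ≤ l} =>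
    Isomorphic C.1 D.1))

/-- The family `D_{l,p}` of double-coverings of `p` sets of cardinality `l`
contained in `{1,…,pl/2}`. -/
def Dfull (l p : ℕ) : Set (Multiset (Finset ℕ)) :=
  {C | Multiset.card C = p ∧ IsDoubleCover C ∧
    (∀ A ∈ C, A ⊆ Finset.Icc 1 (p * l / 2)) ∧ ∀ A ∈ C, A.card = l}

/-- The family `D*_{l,p}` of double-coverings of `p` sets of cardinality
between `1` and `l` contained in `{1,…,pl/2}`. -/
def Dstar (l p : ℕ) : Set (Multiset (Finset ℕ)) :=
  {C | Multiset.card C = p ∧ IsDoubleCover C ∧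
    (∀ A ∈ C, A ⊆ Finset.Icc 1 (p * l / 2)) ∧ ∀ A ∈ C, 1 ≤ A.card ∧ A.card ≤ l}

/-- The Rademacher function `r_n(x) = sign (sin (2^n π x))`. -/
noncomputable def rademacher (n : ℕ) (x : ℝ) : ℝ :=
  Real.sign (Real.sin (2 ^ n * Real.pi * x))

/-- The Walsh function `w_A = ∏_{k ∈ A} r_k`. -/
noncomputable def walsh (A : Finset ℕ) (x : ℝ) : ℝ :=
  ∏ k ∈ A, rademacher k x

section

open Filter Topology Finset

/-! ### Double-coverings by 2-sets and cycle types -/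

/-- Adjacency of points: some member set of `C` contains both. -/
def Adj (C : Multiset (Finset ℕ)) (a b : ℕ) : Prop := ∃ A ∈ C, a ∈ A ∧ b ∈ A

open Classical in
/-- The connected component of the point `a`, as a set of points of `C`. -/
noncomputable def comp (C : Multiset (Finset ℕ)) (a : ℕ) : Finset ℕ :=
  (unionC C).filter fun b => Relation.ReflTransGen (Adj C) a b

/-- The multiset of sizes (numbers of points) of the connected components of `C`. For collections of
pairs it is a complete isomorphism invariant among double-coverings. -/
noncomputable def sizes (C : Multiset (Finset ℕ)) : Multiset ℕ :=
  ((unionC C).image (comp C)).val.map Finset.card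

lemma mem_unionC {C : Multiset (Finset ℕ)} {a : ℕ} : a ∈ unionC C ↔ ∃ A ∈ C, a ∈ A := by
  induction C using Multiset.induction with
  | empty => simp [unionC]
  | cons A C ih => simp only [unionC] at ih; simp [unionC, ih]

lemma comp_image {C : Multiset (Finset ℕ)} {φ : ℕ → ℕ} (hφ : Set.InjOn φ (unionC C))
    {a : ℕ} (ha : a ∈ unionC C) :
    comp (C.map (Finset.image φ)) (φ a) = (comp C a).image φ := by
  have hadj : ∀ a b, Adj C a b → Adj (C.map (Finset.image φ)) (φ a) (φ b) := by
    rintro a b ⟨A, hA, h1, h2⟩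
    exact ⟨A.image φ, Multiset.mem_map_of_mem _ hA, mem_image_of_mem _ h1, mem_image_of_mem _ h2⟩
  ext y
  simp only [comp, mem_filter, mem_image]
  constructor
  · rintro ⟨-, hy⟩
    induction hy with
    | refl => exact ⟨a, ⟨ha, .refl⟩, rfl⟩
    | tail _ hlast ih =>
      obtain ⟨b, ⟨hb, hab⟩, rfl⟩ := ih
      obtain ⟨B, hB, h1, h2⟩ := hlast
      obtain ⟨A, hA, rfl⟩ := Multiset.mem_map.mp hB
      obtain ⟨b', hb', e⟩ := mem_image.mp h1
      obtain ⟨c, hc, rfl⟩ := mem_image.mp h2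
      have hbb : b' = b := hφ (mem_unionC.mpr ⟨A, hA, hb'⟩) hb e
      subst hbb
      exact ⟨c, ⟨mem_unionC.mpr ⟨A, hA, hc⟩, hab.tail ⟨A, hA, hb', hc⟩⟩, rfl⟩
  · rintro ⟨b, ⟨hb, hab⟩, rfl⟩
    obtain ⟨A, hA, hbA⟩ := mem_unionC.mp hb
    exact ⟨mem_unionC.mpr ⟨_, Multiset.mem_map_of_mem _ hA, mem_image_of_mem _ hbA⟩,
      hab.lift φ hadj⟩

lemma sizes_eq_of_isomorphic {C D : Multiset (Finset ℕ)} (h : Isomorphic C D) :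
    sizes C = sizes D := by
  obtain ⟨φ, hφ, rfl⟩ := h
  have hU : unionC (C.map (Finset.image φ)) = (unionC C).image φ := by
    apply Finset.coe_injective
    rw [← hφ.image_eq, coe_image]
  have hI : (unionC (C.map (Finset.image φ))).image (comp (C.map (Finset.image φ))) =
      ((unionC C).image (comp C)).image (Finset.image φ) := by
    rw [hU, image_image, image_image]
    exact image_congr fun a ha => comp_image hφ.injOn ha
  have hsub : ∀ X ∈ (unionC C).image (comp C), X ⊆ unionC C := by
    intro X hX
    obtain ⟨a, -, rfl⟩ := mem_image.mp hX
    intro b hb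
    simp only [comp, mem_filter] at hb
    exact hb.1
  have hinj : Set.InjOn (Finset.image φ) ((unionC C).image (comp C) : Set (Finset ℕ)) := by
    intro X hX Y hY hXY
    apply Finset.coe_injective
    refine (hφ.injOn.image_eq_image_iff (coe_subset.mpr (hsub X hX))
      (coe_subset.mpr (hsub Y hY))).mp ?_
    rw [← coe_image, ← coe_image]
    exact congrArg _ hXY
  rw [sizes, sizes, hI, image_val_of_injOn hinj, Multiset.map_map]
  refine Multiset.map_congr rfl fun X hX => ?_
  exact (card_image_of_injOn (hφ.injOn.mono (coe_subset.mpr (hsub X hX)))).symm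

/-- The collection of the pairs `{i, σ i}`, with the index `i` labelled by `e i`. For `σ` without
fixed points and `e` injective it is a double-covering by 2-sets, a 2-cycle of `σ` giving a repeated
pair. -/
def coll {p : ℕ} (e : Fin p → ℕ) (σ : Equiv.Perm (Fin p)) : Multiset (Finset ℕ) :=
  univ.val.map fun i => {e i, e (σ i)}

lemma mem_unionC_coll {p : ℕ} {e : Fin p → ℕ} {σ : Equiv.Perm (Fin p)} {a : ℕ} :
    a ∈ unionC (coll e σ) ↔ ∃ i, e i = a := by
  simp only [mem_unionC, coll, Multiset.mem_map, mem_val, mem_univ, true_and,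
    exists_exists_eq_and, mem_insert, mem_singleton]
  constructor
  · rintro ⟨i, rfl | rfl⟩
    exacts [⟨i, rfl⟩, ⟨σ i, rfl⟩]
  · rintro ⟨i, rfl⟩
    exact ⟨i, .inl rfl⟩

lemma isomorphic_coll {p : ℕ} {e e' : Fin p → ℕ} (he : Function.Injective e)
    (he' : Function.Injective e') (σ : Equiv.Perm (Fin p)) :
    Isomorphic (coll e σ) (coll e' σ) := by
  have hφ : ∀ i, Function.extend e e' 0 (e i) = e' i := fun i => he.extend_apply _ _ _
  refine ⟨Function.extend e e' 0, ⟨?_, ?_, ?_⟩, ?_⟩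
  · intro a ha
    obtain ⟨i, rfl⟩ := mem_unionC_coll.mp ha
    rw [hφ]
    exact mem_unionC_coll.mpr ⟨i, rfl⟩
  · intro a ha b hb hab
    obtain ⟨i, rfl⟩ := mem_unionC_coll.mp ha
    obtain ⟨j, rfl⟩ := mem_unionC_coll.mp hb
    rw [hφ, hφ] at hab
    rw [he' hab]
  · intro a ha
    obtain ⟨i, rfl⟩ := mem_unionC_coll.mp ha
    exact ⟨e i, mem_unionC_coll.mpr ⟨i, rfl⟩, hφ i⟩
  · simp only [coll, Multiset.map_map]
    refine Multiset.map_congr rfl fun i _ => ?_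
    simp [image_insert, hφ]

/-- Conjugating `σ` only relabels the points of its collection of pairs. -/
lemma isomorphic_coll_of_isConj {p : ℕ} {e : Fin p → ℕ} (he : Function.Injective e)
    {σ τ : Equiv.Perm (Fin p)} (h : IsConj σ τ) : Isomorphic (coll e σ) (coll e τ) := by
  obtain ⟨g, rfl⟩ := isConj_iff.mp h
  have : coll e (g * σ * g⁻¹) = coll (e ∘ g) σ := by
    simp only [coll]
    conv_lhs => rw [← Multiset.map_univ_val_equiv g, Multiset.map_map]
    refine Multiset.map_congr rfl fun i _ => ?_
    simp
  rw [this]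
  exact isomorphic_coll he (he.comp g.injective) σ

lemma coll_valid {p : ℕ} {σ : Equiv.Perm (Fin p)} (hσ : ∀ i, σ i ≠ i) :
    Multiset.card (coll Fin.val σ) = p ∧ IsDoubleCover (coll Fin.val σ) ∧
      ∀ A ∈ coll Fin.val σ, A.card = 2 := by
  refine ⟨by simp [coll], fun a ha => ?_, fun A hA => ?_⟩
  · obtain ⟨i, rfl⟩ := mem_unionC_coll.mp ha
    rw [coll, Multiset.countP_map, ← filter_val, card_val]
    have : (univ.filter fun j : Fin p => (i : ℕ) ∈ ({(j : ℕ), ((σ j : Fin p) : ℕ)} : Finset ℕ)) =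
        {i, σ⁻¹ i} := by
      ext j
      simp only [mem_filter, mem_univ, true_and, mem_insert, mem_singleton, Fin.val_inj,
        Equiv.Perm.eq_inv_iff_eq]
      exact or_congr eq_comm eq_comm
    rw [this, card_pair]
    intro h
    exact hσ i (Equiv.Perm.eq_inv_iff_eq.mp h)
  · simp only [coll, Multiset.mem_map, mem_val, mem_univ, true_and] at hA
    obtain ⟨i, rfl⟩ := hA
    rw [card_pair]
    exact fun h => hσ i (Fin.val_injective h).symm

/-- Every double-covering by `p` 2-sets comes from a permutation without fixed points. Hall's theorem
chooses a distinct representative `f i` in each member set `A i`; there are as many points as sets, so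
every point is chosen once, and `σ` sends `i` to the index of the set represented by the second
point of `A i`. -/
lemma exists_coll {p : ℕ} {C : Multiset (Finset ℕ)} (hcard : Multiset.card C = p)
    (hC : IsDoubleCover C) (h2 : ∀ A ∈ C, A.card = 2) :
    ∃ (e : Fin p → ℕ) (σ : Equiv.Perm (Fin p)), Function.Injective e ∧ (∀ i, σ i ≠ i) ∧
      C = coll e σ := by
  obtain ⟨A, rfl⟩ : ∃ A : Fin p → Finset ℕ, C = univ.val.map A := by
    subst hcard
    induction C using Quotient.inductionOn with
    | h l =>
      refine ⟨fun i => l.get i, ?_⟩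
      rw [Fin.univ_val_map]
      simp
  have hA2 : ∀ i, (A i).card = 2 := fun i => h2 _ (Multiset.mem_map_of_mem _ (mem_univ i))
  have hdeg : ∀ a ∈ univ.biUnion A, #{i | a ∈ A i} = 2 := by
    intro a ha
    have := hC a (mem_unionC.mpr (by simpa using ha))
    rwa [Multiset.countP_map, ← filter_val, card_val] at this
  have hcount : ∀ s : Finset (Fin p), 2 * #s = ∑ a ∈ s.biUnion A, #{i ∈ s | a ∈ A i} := by
    intro s
    have h := sum_card_bipartiteAbove_eq_sum_card_bipartiteBelow (s := s) (t := s.biUnion A)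
      (fun i a => a ∈ A i)
    simp only [bipartiteBelow, bipartiteAbove] at h
    rw [← h, mul_comm, ← smul_eq_mul]
    refine (sum_eq_card_nsmul fun i hi => ?_).symm
    rw [← hA2 i]
    congr 1
    ext a
    simp only [mem_filter, mem_biUnion, and_iff_right_iff_imp]
    exact fun ha => ⟨i, hi, ha⟩
  obtain ⟨f, hf, hfA⟩ := (all_card_le_biUnion_card_iff_exists_injective A).mp fun s => by
    have h1 : ∑ a ∈ s.biUnion A, #{i ∈ s | a ∈ A i} ≤ #(s.biUnion A) • 2 := by
      refine sum_le_card_nsmul _ _ _ fun a ha => ?_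
      rw [← hdeg a (biUnion_subset_biUnion_of_subset_left A (subset_univ s) ha)]
      exact card_le_card (filter_subset_filter _ (subset_univ s))
    rw [← hcount, smul_eq_mul] at h1
    omega
  have hsurj : univ.image f = univ.biUnion A := by
    refine eq_of_subset_of_card_le ?_ ?_
    · intro a ha
      obtain ⟨i, -, rfl⟩ := mem_image.mp ha
      exact mem_biUnion.mpr ⟨i, mem_univ i, hfA i⟩
    · have := hcount univ
      rw [sum_congr rfl hdeg, sum_const, smul_eq_mul] at this
      rw [card_image_of_injective _ hf]
      omega
  have hg : ∀ i, ∃ k, f k ≠ f i ∧ A i = {f i, f k} := by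
    intro i
    obtain ⟨x, y, hxy, hAi⟩ := card_eq_two.mp (hA2 i)
    have hmem : ∀ b ∈ A i, ∃ k, f k = b := by
      intro b hb
      have : b ∈ univ.image f := hsurj ▸ mem_biUnion.mpr ⟨i, mem_univ i, hb⟩
      simpa using this
    have hfi := hfA i
    rw [hAi, mem_insert, mem_singleton] at hfi
    rcases hfi with h | h
    · obtain ⟨k, hk⟩ := hmem y (by simp [hAi])
      exact ⟨k, by rw [hk, h]; exact hxy.symm, by rw [hAi, h, hk]⟩
    · obtain ⟨k, hk⟩ := hmem x (by simp [hAi])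
      exact ⟨k, by rw [hk, h]; exact hxy, by rw [hAi, h, hk, pair_comm]⟩
  choose s hs1 hs2 using hg
  -- If `s i = s j` with `i ≠ j`, the point `f (s i)` lies in three member sets: `A i`, `A j`, `A (s i)`.
  have hsinj : Function.Injective s := by
    intro i j hij
    by_contra hne
    have hk1 : s i ≠ i := fun h => hs1 i (by rw [h])
    have hk2 : s i ≠ j := fun h => hs1 j (by rw [← hij, h])
    have h3 : ({i, j, s i} : Finset (Fin p)) ⊆ ({k | f (s i) ∈ A k} : Finset (Fin p)) := by
      intro k hk
      simp only [mem_insert, mem_singleton] at hk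
      rw [mem_filter]
      refine ⟨mem_univ _, ?_⟩
      rcases hk with rfl | rfl | rfl
      · rw [hs2 k]; simp
      · rw [hij, hs2 k]; simp
      · exact hfA _
    have := card_le_card h3
    rw [hdeg (f (s i)) (mem_biUnion.mpr ⟨s i, mem_univ _, hfA _⟩),
      card_eq_three.mpr ⟨i, j, s i, hne, hk1.symm, hk2.symm, rfl⟩] at this
    omega
  refine ⟨f, Equiv.ofBijective s (Finite.injective_iff_bijective.mp hsinj), hf, fun i h => ?_, ?_⟩
  · exact hs1 i (congrArg f h)
  · exact Multiset.map_congr rfl fun i _ => hs2 i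

/-- Components of the collection of `σ` are the cycles of `σ`. -/
lemma comp_coll {p : ℕ} {σ : Equiv.Perm (Fin p)} (hσ : ∀ i, σ i ≠ i) (i : Fin p) :
    comp (coll Fin.val σ) i = (σ.cycleOf i).support.image Fin.val := by
  have hsame : ∀ a b : Fin p, Adj (coll Fin.val σ) a b → σ.SameCycle a b := by
    rintro a b ⟨A, hA, ha, hb⟩
    simp only [coll, Multiset.mem_map, mem_val, mem_univ, true_and] at hA
    obtain ⟨j, rfl⟩ := hA
    simp only [mem_insert, mem_singleton, Fin.val_inj] at ha hb
    have hj : σ.SameCycle j (σ j) := (Equiv.Perm.sameCycle_apply_right).mpr (.refl _ _)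
    rcases ha with rfl | rfl <;> rcases hb with rfl | rfl
    exacts [.refl _ _, hj, hj.symm, .refl _ _]
  have hstep : ∀ j : Fin p, Adj (coll Fin.val σ) j (σ j) := fun j =>
    ⟨_, Multiset.mem_map_of_mem _ (mem_univ j), by simp, by simp⟩
  ext y
  simp only [comp, mem_filter, mem_image, mem_unionC_coll]
  have hsupp : ∀ j, j ∈ (σ.cycleOf i).support ↔ σ.SameCycle i j := by
    intro j
    rw [Equiv.Perm.mem_support_cycleOf_iff]
    exact and_iff_left (Equiv.Perm.mem_support.mpr (hσ i))
  simp only [hsupp]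
  constructor
  · rintro ⟨-, hy⟩
    induction hy with
    | refl => exact ⟨i, .refl _ _, rfl⟩
    | tail _ hlast ih =>
      obtain ⟨j, hj, rfl⟩ := ih
      obtain ⟨k, rfl⟩ : ∃ k : Fin p, (k : ℕ) = _ := by
        obtain ⟨A, hA, -, hb⟩ := hlast
        exact mem_unionC_coll.mp (mem_unionC.mpr ⟨A, hA, hb⟩)
      exact ⟨k, hj.trans (hsame _ _ hlast), rfl⟩
  · rintro ⟨j, hj, rfl⟩
    refine ⟨⟨j, rfl⟩, ?_⟩
    obtain ⟨n, rfl⟩ := hj.exists_nat_pow_eq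
    clear hj
    induction n with
    | zero => exact .refl
    | succ n ih =>
      rw [pow_succ', Equiv.Perm.mul_apply]
      exact ih.tail (hstep _)

lemma sizes_coll {p : ℕ} {σ : Equiv.Perm (Fin p)} (hσ : ∀ i, σ i ≠ i) :
    sizes (coll Fin.val σ) = σ.cycleType := by
  have h1 : (unionC (coll Fin.val σ)).image (comp (coll Fin.val σ)) =
      σ.cycleFactorsFinset.image fun c => c.support.image Fin.val := by
    ext X
    simp only [mem_image, mem_unionC_coll]
    constructor
    · rintro ⟨_, ⟨i, rfl⟩, rfl⟩
      exact ⟨σ.cycleOf i, Equiv.Perm.cycleOf_mem_cycleFactorsFinset_iff.mpr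
        (Equiv.Perm.mem_support.mpr (hσ i)), (comp_coll hσ i).symm⟩
    · rintro ⟨c, hc, rfl⟩
      obtain ⟨i, hi⟩ := (Equiv.Perm.mem_cycleFactorsFinset_iff.mp hc).1.nonempty_support
      refine ⟨i, ⟨i, rfl⟩, ?_⟩
      rw [comp_coll hσ, ← Equiv.Perm.cycle_is_cycleOf hi hc]
  rw [sizes, h1, image_val_of_injOn, Multiset.map_map, Equiv.Perm.cycleType_def]
  · refine Multiset.map_congr rfl fun c _ => ?_
    simp [card_image_of_injective _ Fin.val_injective]
  · intro c hc d hd hcd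
    have hs : c.support = d.support := image_injective Fin.val_injective hcd
    obtain ⟨i, hi⟩ := (Equiv.Perm.mem_cycleFactorsFinset_iff.mp hc).1.nonempty_support
    rw [Equiv.Perm.cycle_is_cycleOf hi hc, Equiv.Perm.cycle_is_cycleOf (hs ▸ hi) hd]

lemma exists_derangement {p : ℕ} {m : Multiset ℕ} (hsum : m.sum = p) (h2 : ∀ a ∈ m, 2 ≤ a) :
    ∃ σ : Equiv.Perm (Fin p), (∀ i, σ i ≠ i) ∧ σ.cycleType = m := by
  obtain ⟨σ, hσ⟩ := (Equiv.Perm.exists_with_cycleType_iff (α := Fin p)).mpr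
    ⟨by rw [hsum, Fintype.card_fin], h2⟩
  refine ⟨σ, fun i => ?_, hσ⟩
  have : σ.support = univ := by
    rw [← card_eq_iff_eq_univ, ← Equiv.Perm.sum_cycleType, hσ, hsum, Fintype.card_fin]
  exact Equiv.Perm.mem_support.mp (this ▸ mem_univ i)

/-- Isomorphism classes of double-coverings by `p` 2-sets correspond to cycle types of fixed-point-free
permutations of `p` points, that is, to partitions of `p` into parts at least `2`. -/
lemma muFull_two (p : ℕ) : muFull 2 p = #(Nat.Partition.restricted p (2 ≤ ·)) := by
  have hex : ∀ x : Nat.Partition.restricted p (2 ≤ ·), ∃ σ : Equiv.Perm (Fin p),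
      (∀ i, σ i ≠ i) ∧ σ.cycleType = x.1.parts := fun x =>
    exists_derangement x.1.parts_sum (by simpa [Nat.Partition.restricted] using x.2)
  choose σ hσ hcyc using hex
  rw [muFull, ← Nat.card_eq_finsetCard]
  symm
  refine Nat.card_eq_of_bijective
    (fun x => Quot.mk _ ⟨coll Fin.val (σ x), coll_valid (hσ x)⟩) ⟨fun x y hxy => ?_, fun q => ?_⟩
  · have h := congrArg (Quot.lift (fun C : {C : Multiset (Finset ℕ) //
      Multiset.card C = p ∧ IsDoubleCover C ∧ ∀ A ∈ C, A.card = 2} => sizes C.1)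
      fun C D h => sizes_eq_of_isomorphic h) hxy
    simp only [sizes_coll (hσ _), hcyc] at h
    exact Subtype.ext (Nat.Partition.ext h)
  · induction q using Quot.inductionOn with
    | h C =>
      obtain ⟨C, h1, h2, h3⟩ := C
      obtain ⟨e, τ, he, hτ, rfl⟩ := exists_coll h1 h2 h3
      have hsupp : τ.support = univ := by
        ext i; simpa using hτ i
      let x : Nat.Partition p := ⟨τ.cycleType, fun hi =>
        (Equiv.Perm.two_le_of_mem_cycleType hi).trans_lt' two_pos, by
        rw [Equiv.Perm.sum_cycleType, hsupp, card_univ, Fintype.card_fin]⟩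
      have hx : x ∈ Nat.Partition.restricted p (2 ≤ ·) := by
        simp only [Nat.Partition.restricted, mem_filter, mem_univ, true_and]
        exact fun i hi => Equiv.Perm.two_le_of_mem_cycleType (σ := τ) hi
      refine ⟨⟨x, hx⟩, ?_⟩
      have hconj : IsConj (σ ⟨x, hx⟩) τ :=
        Equiv.Perm.isConj_iff_cycleType_eq.mpr (hcyc ⟨x, hx⟩)
      exact (Quot.sound (r := fun C D : {C : Multiset (Finset ℕ) //
          Multiset.card C = p ∧ IsDoubleCover C ∧ ∀ A ∈ C, A.card = 2} => Isomorphic C.1 D.1)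
          (b := ⟨coll Fin.val τ, coll_valid hτ⟩)
          (isomorphic_coll_of_isConj Fin.val_injective hconj)).trans
        (Quot.sound (isomorphic_coll Fin.val_injective he τ))

/-! ### The generating function -/

/-- Euler's function `∏_{n ≥ 1} (1 - q ^ n)`. -/
noncomputable def eulerE (q : ℂ) : ℂ := ∏' n : ℕ, (1 - q ^ (n + 1))

/-- The generating function `∏_{n ≥ 2} (1 - q ^ n)⁻¹` of partitions without parts equal to `1`. -/
noncomputable def genF (q : ℂ) : ℂ := (1 - q) / eulerE q

/-- The number of partitions of `n` into parts at least `2`. -/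
noncomputable def rp (n : ℕ) : ℕ := #(Nat.Partition.restricted n (2 ≤ ·))

lemma one_sub_pow_ne_zero {q : ℂ} (hq : ‖q‖ < 1) (n : ℕ) : 1 - q ^ (n + 1) ≠ 0 := by
  intro h
  have h1 : ‖q ^ (n + 1)‖ = 1 := by rw [← sub_eq_zero.mp h]; simp
  rw [norm_pow] at h1
  exact absurd h1 (pow_lt_one₀ (norm_nonneg _) hq (by omega)).ne

lemma eulerE_ne_zero {q : ℂ} (hq : ‖q‖ < 1) : eulerE q ≠ 0 := by
  have := tprod_one_add_ne_zero_of_summable (f := fun n : ℕ ↦ -q ^ (n + 1)) ?_ ?_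
  · simpa [eulerE, sub_eq_add_neg] using this
  · intro n; simpa [sub_eq_add_neg] using one_sub_pow_ne_zero hq n
  · simpa using (summable_nat_add_iff 1).mpr (summable_geometric_of_lt_one (norm_nonneg _) hq)

lemma tendsto_prod_genF {q : ℂ} (hq : ‖q‖ < 1) :
    Tendsto (fun N => ∏ k ∈ range N, (1 - q ^ (k + 2))⁻¹) atTop (𝓝 (genF q)) := by
  have h := (ModularForm.multipliable_one_sub_pow hq).hasProd.tendsto_prod_nat
  have h2 := ((tendsto_add_atTop_iff_nat 1).mpr h).inv₀ (eulerE_ne_zero hq)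
  have h3 := h2.const_mul (1 - q)
  refine (h3.congr fun N => ?_)
  rw [prod_range_succ', prod_inv_distrib]
  have := one_sub_pow_ne_zero hq 0
  simp only [zero_add, pow_one] at this ⊢
  field_simp

/-- The formal geometric series `∑_j X ^ (k j)`, that is `(1 - X ^ k)⁻¹`. -/
noncomputable def geo (k : ℕ) : PowerSeries ℝ := PowerSeries.mk fun n => if k ∣ n then 1 else 0

open PowerSeries PowerSeries.WithPiTopology in
lemma tsum_X_pow_eq_geo (k : ℕ) (hk : k ≠ 0) : ∑' j : ℕ, (X : ℝ⟦X⟧) ^ (k * j) = geo k := by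
  refine HasSum.tsum_eq ?_
  have h := (geo k).hasSum_of_monomials_self
  have hinj : Function.Injective (fun j : ℕ => k * j) := fun a b h => by simpa [hk] using h
  rw [← hinj.hasSum_iff] at h
  · convert h using 2 with j
    simp [geo, monomial_eq_C_mul_X_pow]
  · intro x hx
    have : ¬ k ∣ x := fun ⟨j, hj⟩ => hx ⟨j, hj.symm⟩
    simp [geo, this]

/-- The formal product `∏_{k = 2}^{N + 1} (1 - X ^ k)⁻¹`, whose coefficients count partitions with all
parts in `[2, N + 1]`. -/
noncomputable def geoProd (N : ℕ) : PowerSeries ℝ := ∏ k ∈ range N, geo (k + 2)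

open PowerSeries PowerSeries.WithPiTopology in
lemma tendsto_coeff_geoProd (n : ℕ) :
    Tendsto (fun N => (geoProd N).coeff n) atTop (𝓝 (rp n : ℝ)) := by
  have h := (Nat.Partition.hasProd_powerSeriesMk_card_restricted ℝ (2 ≤ ·)).tendsto_prod_nat
  rw [tendsto_iff_coeff_tendsto] at h
  have h := (tendsto_add_atTop_iff_nat 1).mpr (h n)
  simp only [coeff_mk] at h
  refine h.congr fun N => ?_
  rw [prod_range_succ']
  congr 1
  simp only [geoProd]
  simp
  refine prod_congr rfl fun k _ => ?_
  rw [← tsum_X_pow_eq_geo _ (by omega)]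

lemma geo_nonneg (k n : ℕ) : 0 ≤ (geo k).coeff n := by
  simp only [geo, PowerSeries.coeff_mk]; split_ifs <;> norm_num

lemma geoProd_nonneg (N n : ℕ) : 0 ≤ (geoProd N).coeff n := by
  induction N generalizing n with
  | zero => simp only [geoProd, range_zero, prod_empty, PowerSeries.coeff_one]; split_ifs <;> norm_num
  | succ N ih =>
    rw [geoProd, prod_range_succ, PowerSeries.coeff_mul]
    exact sum_nonneg fun _ _ => mul_nonneg (ih _) (geo_nonneg _ _)

lemma geoProd_mono (n : ℕ) : Monotone (fun N => (geoProd N).coeff n) := by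
  refine monotone_nat_of_le_succ fun N => ?_
  rw [geoProd, geoProd, prod_range_succ, PowerSeries.coeff_mul]
  have h := single_le_sum (s := antidiagonal n)
    (f := fun p => (geoProd N).coeff p.1 * (geo (N + 2)).coeff p.2)
    (fun p _ => mul_nonneg (geoProd_nonneg _ _) (geo_nonneg _ _)) (a := (n, 0)) (by simp)
  simpa [geo, geoProd] using h

lemma geoProd_le (n N : ℕ) : (geoProd N).coeff n ≤ rp n :=
  (geoProd_mono n).ge_of_tendsto (tendsto_coeff_geoProd n) N

lemma hasSum_geo {q : ℂ} (hq : ‖q‖ < 1) (k : ℕ) (hk : k ≠ 0) :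
    Summable (fun n => ‖((geo k).coeff n : ℂ) * q ^ n‖) ∧
      ∑' n, ((geo k).coeff n : ℂ) * q ^ n = (1 - q ^ k)⁻¹ := by
  constructor
  · refine Summable.of_nonneg_of_le (fun _ => norm_nonneg _) (fun n => ?_)
      (summable_geometric_of_lt_one (norm_nonneg _) hq)
    rw [norm_mul, norm_pow]
    refine mul_le_of_le_one_left (by positivity) ?_
    simp only [geo, PowerSeries.coeff_mk]; split_ifs <;> simp
  · have h := hasSum_geometric_of_norm_lt_one (ξ := q ^ k)
      (by rw [norm_pow]; exact pow_lt_one₀ (norm_nonneg _) hq hk)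
    have hinj : Function.Injective (fun j : ℕ => k * j) := fun a b h => by simpa [hk] using h
    refine HasSum.tsum_eq ?_
    rw [← hinj.hasSum_iff]
    · have e : ((fun n => ((geo k).coeff n : ℂ) * q ^ n) ∘ fun j => k * j)
          = fun j => (q ^ k) ^ j := by
        funext j; simp [geo, pow_mul]
      rw [e]; exact h
    · intro x hx
      have : ¬ k ∣ x := fun ⟨j, hj⟩ => hx ⟨j, hj.symm⟩
      simp [geo, this]

lemma hasSum_geoProd {q : ℂ} (hq : ‖q‖ < 1) (N : ℕ) :
    Summable (fun n => ‖((geoProd N).coeff n : ℂ) * q ^ n‖) ∧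
      ∑' n, ((geoProd N).coeff n : ℂ) * q ^ n = ∏ k ∈ range N, (1 - q ^ (k + 2))⁻¹ := by
  induction N with
  | zero =>
    have : ∀ n ∉ ({0} : Finset ℕ), ((geoProd 0).coeff n : ℂ) * q ^ n = 0 := by
      intro n hn
      have : n ≠ 0 := by simpa using hn
      simp [geoProd, PowerSeries.coeff_one, this]
    constructor
    · exact summable_of_ne_finset_zero (s := {0}) fun n hn => by rw [this n hn, norm_zero]
    · rw [tsum_eq_sum this]; simp [geoProd]
  | succ N ih =>
    obtain ⟨h1, h2⟩ := ih
    obtain ⟨g1, g2⟩ := hasSum_geo hq (N + 2) (by omega)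
    have key : ∀ n, ((geoProd (N + 1)).coeff n : ℂ) * q ^ n = ∑ p ∈ antidiagonal n,
        (((geoProd N).coeff p.1 : ℂ) * q ^ p.1) * (((geo (N + 2)).coeff p.2 : ℂ) * q ^ p.2) := by
      intro n
      rw [geoProd, prod_range_succ, PowerSeries.coeff_mul]
      push_cast
      rw [sum_mul]
      refine sum_congr rfl fun p hp => ?_
      rw [← mem_antidiagonal.mp hp, pow_add, geoProd]
      ring
    have s1 := summable_norm_sum_mul_antidiagonal_of_summable_norm h1 g1
    have s2 := tsum_mul_tsum_eq_tsum_sum_antidiagonal_of_summable_norm h1 g1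
    refine ⟨s1.congr fun n => by rw [key n], ?_⟩
    rw [tsum_congr key, ← s2, h2, g2, prod_range_succ]

/-- The partial products at the real point `‖q‖` have nonnegative coefficients increasing to `rp` and
converge, which bounds the partial sums of `∑ rp n ‖q‖ ^ n`. -/
lemma summable_rp {q : ℂ} (hq : ‖q‖ < 1) : Summable (fun n => ‖(rp n : ℂ) * q ^ n‖) := by
  set x : ℂ := (‖q‖ : ℂ) with hx
  have hx1 : ‖x‖ < 1 := by simpa [hx] using hq
  have ht := (tendsto_prod_genF hx1).norm
  obtain ⟨C, hC⟩ := ht.bddAbove_range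
  refine summable_of_sum_range_le (c := C) (fun _ => norm_nonneg _) fun M => ?_
  have hlim : Tendsto (fun N => ∑ n ∈ range M, (geoProd N).coeff n * ‖q‖ ^ n) atTop
      (𝓝 (∑ n ∈ range M, ‖(rp n : ℂ) * q ^ n‖)) := by
    refine tendsto_finsetSum _ fun n _ => ?_
    simpa using (tendsto_coeff_geoProd n).mul_const (‖q‖ ^ n)
  refine le_of_tendsto' hlim fun N => ?_
  refine le_trans ?_ (hC ⟨N, rfl⟩)
  obtain ⟨h1, h2⟩ := hasSum_geoProd hx1 N
  have e : ∀ n, (((geoProd N).coeff n : ℂ) * x ^ n) = (((geoProd N).coeff n * ‖q‖ ^ n : ℝ) : ℂ) := by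
    intro n; simp [hx]
  have hnn : ∀ n, 0 ≤ (geoProd N).coeff n * ‖q‖ ^ n := fun n =>
    mul_nonneg (geoProd_nonneg _ _) (by positivity)
  simp only [← h2, e, ← Complex.ofReal_tsum] at h1 ⊢
  simp only [Complex.norm_real, Real.norm_of_nonneg (hnn _),
    Real.norm_of_nonneg (tsum_nonneg hnn)] at h1 ⊢
  exact h1.sum_le_tsum _ (fun n _ => hnn n)

/-- The formal product identity evaluated at `q` in the open unit disc, by dominated convergence from
the finite products. -/
lemma hasSum_rp {q : ℂ} (hq : ‖q‖ < 1) : HasSum (fun n => (rp n : ℂ) * q ^ n) (genF q) := by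
  have hs := summable_rp hq
  have ht : Tendsto (fun N => ∑' n, ((geoProd N).coeff n : ℂ) * q ^ n) atTop
      (𝓝 (∑' n, (rp n : ℂ) * q ^ n)) := by
    refine tendsto_tsum_of_dominated_convergence hs (fun n => ?_) (.of_forall fun N n => ?_)
    · exact ((Complex.continuous_ofReal.tendsto _).comp (tendsto_coeff_geoProd n)).mul_const _
    · rw [norm_mul, norm_mul]
      refine mul_le_mul_of_nonneg_right ?_ (norm_nonneg _)
      rw [Complex.norm_real, Real.norm_of_nonneg (geoProd_nonneg _ _)]
      simpa using geoProd_le n N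
  simp_rw [(hasSum_geoProd hq _).2] at ht
  rw [tendsto_nhds_unique (tendsto_prod_genF hq) ht]
  exact (hs.of_norm).hasSum

/-! ### Cauchy's formula and the modular transformation -/

open Real in
/-- Cauchy's formula for the coefficient `rp n` on the circle of radius `e ^ (-t)`. -/
lemma rp_integral (n : ℕ) {t : ℝ} (ht : 0 < t) :
    ∫ θ in (-π)..π, genF (Complex.exp (-(t + θ * Complex.I))) *
      Complex.exp (n * (t + θ * Complex.I)) = 2 * π * rp n := by
  have hq : ∀ θ : ℝ, ‖Complex.exp (-(t + θ * Complex.I))‖ = Real.exp (-t) := by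
    intro θ; simp [Complex.norm_exp]
  have hlt : Real.exp (-t) < 1 := by rw [Real.exp_lt_one_iff]; linarith
  have hen : ∀ θ : ℝ, ‖Complex.exp (n * (t + θ * Complex.I))‖ = Real.exp (n * t) := by
    intro θ; simp [Complex.norm_exp]
  have hsum : Summable fun m => (rp m : ℝ) * Real.exp (-t) ^ m * Real.exp (n * t) := by
    have := summable_rp (q := (Real.exp (-t) : ℂ))
      (by rw [Complex.norm_real, Real.norm_of_nonneg (Real.exp_pos _).le]; exact hlt)
    refine (this.mul_right (Real.exp (n * t))).congr fun m => ?_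
    rw [norm_mul, norm_pow, Complex.norm_real, Real.norm_of_nonneg (Real.exp_pos _).le]
    simp
  have h := intervalIntegral.hasSum_integral_of_dominated_convergence (a := -π) (b := π)
    (μ := MeasureTheory.volume)
    (F := fun m (θ : ℝ) => (rp m : ℂ) * Complex.exp (-(t + θ * Complex.I)) ^ m *
      Complex.exp (n * (t + θ * Complex.I)))
    (f := fun θ : ℝ => genF (Complex.exp (-(t + θ * Complex.I))) *
      Complex.exp (n * (t + θ * Complex.I)))
    (fun m _ => (rp m : ℝ) * Real.exp (-t) ^ m * Real.exp (n * t))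
    (fun m => (by fun_prop : Continuous fun θ : ℝ => (rp m : ℂ) *
      Complex.exp (-(t + θ * Complex.I)) ^ m *
      Complex.exp (n * (t + θ * Complex.I))).aestronglyMeasurable)
    (fun m => .of_forall fun θ _ => by
      rw [norm_mul, norm_mul, norm_pow, hq, hen]; simp)
    (.of_forall fun θ _ => hsum)
    (by simp)
    (.of_forall fun θ _ => (hasSum_rp (by rw [hq]; exact hlt)).mul_right _)
  refine h.unique ?_
  have hterm : ∀ m : ℕ, ∫ θ in (-π)..π, (rp m : ℂ) * Complex.exp (-(t + θ * Complex.I)) ^ m *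
      Complex.exp (n * (t + θ * Complex.I)) = if m = n then (2 * π * rp n : ℂ) else 0 := by
    intro m
    have e : ∀ θ : ℝ, (rp m : ℂ) * Complex.exp (-(t + θ * Complex.I)) ^ m *
      Complex.exp (n * (t + θ * Complex.I)) = (rp m * Complex.exp ((n - m) * t)) *
        Complex.exp (((n - m) * Complex.I) * θ) := by
      intro θ
      rw [← Complex.exp_nat_mul, mul_assoc, mul_assoc, ← Complex.exp_add, ← Complex.exp_add]
      ring_nf
    simp_rw [e]
    rw [intervalIntegral.integral_const_mul]
    split_ifs with hm
    · subst hm; simp; ring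
    · have hne : ((n : ℂ) - m) * Complex.I ≠ 0 := by
        refine mul_ne_zero ?_ Complex.I_ne_zero
        rw [sub_ne_zero]; intro h; exact hm (by exact_mod_cast h.symm)
      rw [integral_exp_mul_complex hne]
      have : Complex.exp (((n - m) * Complex.I) * (π : ℝ)) =
          Complex.exp (((n - m) * Complex.I) * ((-π : ℝ) : ℂ)) := by
        rw [Complex.exp_eq_exp_iff_exists_int]
        refine ⟨n - m, ?_⟩
        push_cast; ring
      rw [this, sub_self]; simp
  simp_rw [hterm]
  exact hasSum_ite_eq n _

open Real in
lemma eta_eq_eulerE (z : ℂ) :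
    ModularForm.eta (Complex.I * z / (2 * π)) = Complex.exp (-z / 24) * eulerE (Complex.exp (-z)) := by
  have hpi : (π : ℂ) ≠ 0 := by exact_mod_cast pi_ne_zero
  have hI : 2 * (π : ℂ) * Complex.I * (Complex.I * z / (2 * π)) = -z := by
    field_simp; rw [Complex.I_sq]; ring
  rw [ModularForm.eta, eulerE]
  congr 1
  · rw [Function.Periodic.qParam, hI]; norm_num
  · refine tprod_congr fun n => ?_
    rw [ModularForm.eta_q_eq_pow, hI]

open Real in
/-- The functional equation of `∏ (1 - q ^ n)` under `z ↦ 4 π ^ 2 / z`, where `q = e ^ (-z)`: this is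
the transformation of `η` under `τ ↦ -1 / τ` at `τ = i z / (2 π)`. -/
lemma eulerE_functional {z : ℂ} (hz : 0 < z.re) :
    Complex.exp (-(4 * π ^ 2 / z) / 24) * eulerE (Complex.exp (-(4 * π ^ 2 / z))) =
      (Complex.sqrt Complex.I)⁻¹ * (Complex.sqrt (Complex.I * z / (2 * π)) *
        (Complex.exp (-z / 24) * eulerE (Complex.exp (-z)))) := by
  have hpi : (π : ℂ) ≠ 0 := by exact_mod_cast pi_ne_zero
  have hz0 : z ≠ 0 := by rintro rfl; simp at hz
  have hmem : Complex.I * z / (2 * π) ∈ UpperHalfPlane.upperHalfPlaneSet := by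
    change 0 < (Complex.I * z / (2 * π)).im
    have : Complex.I * z / (2 * π) = Complex.I * z / ((2 * π : ℝ) : ℂ) := by push_cast; rfl
    rw [this, Complex.div_ofReal_im]
    simp
    positivity
  have h := ModularForm.eta_comp_eq_csqrt_I_inv hmem
  simp only [Function.comp_apply, Pi.smul_apply, Pi.mul_apply, smul_eq_mul] at h
  rw [eta_eq_eulerE] at h
  rw [← h, ← eta_eq_eulerE]
  congr 1
  field_simp
  rw [Complex.I_sq]; ring

lemma csqrt_real_mul {r : ℝ} (hr : 0 < r) {w : ℂ} (hw : w ≠ 0) :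
    Complex.sqrt (r * w) = (Real.sqrt r : ℂ) * Complex.sqrt w := by
  have hr' : (r : ℂ) ≠ 0 := by exact_mod_cast hr.ne'
  rw [Complex.sqrt, Complex.sqrt, Complex.cpow_def_of_ne_zero (mul_ne_zero hr' hw),
    Complex.cpow_def_of_ne_zero hw, Complex.log_ofReal_mul hr hw, add_mul, Complex.exp_add,
    Real.sqrt_eq_rpow, Complex.ofReal_cpow hr.le, Complex.cpow_def_of_ne_zero hr', Complex.ofReal_log hr.le]
  norm_num

lemma eulerE_tendsto_zero : Tendsto eulerE (𝓝 0) (𝓝 1) := by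
  have h := (ModularForm.differentiableOn_tprod_one_sub_pow.differentiableAt
    (Metric.ball_mem_nhds (0 : ℂ) one_pos)).continuousAt.tendsto
  simpa [eulerE] using! h

open Real in
/-- The behaviour `genF (e ^ (-z)) ∼ t ^ (3/2) e ^ (π ^ 2 / (6 z)) / √(2 π)` as `t → 0⁺` and `z ∼ t`.
In the functional equation the dual nome `e ^ (-4 π ^ 2 / z)` tends to `0`, so the dual product tends
to `1`. -/
lemma tendsto_genF {ι : Type*} {l : Filter ι} {t : ι → ℝ} {z : ι → ℂ}
    (ht : Tendsto t l (𝓝 0)) (htpos : ∀ᶠ i in l, 0 < t i)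
    (hz : Tendsto (fun i => z i / t i) l (𝓝 1)) :
    Tendsto (fun i => genF (Complex.exp (-z i)) * Complex.exp (-(π ^ 2 / (6 * z i))) /
      (t i * Real.sqrt (t i) : ℝ)) l (𝓝 ((1 / Real.sqrt (2 * π) : ℝ) : ℂ)) := by
  have hpi : (π : ℂ) ≠ 0 := by exact_mod_cast pi_ne_zero
  have hsI : Complex.sqrt Complex.I ≠ 0 := by
    rw [Complex.sqrt, Complex.cpow_def_of_ne_zero Complex.I_ne_zero]; exact Complex.exp_ne_zero _
  have ht' : Tendsto (fun i => (t i : ℂ)) l (𝓝 0) := by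
    simpa using! (Complex.continuous_ofReal.tendsto 0).comp ht
  have hre : ∀ᶠ i in l, 1 / 2 < (z i / t i).re := by
    have := (Complex.continuous_re.tendsto 1).comp hz
    exact this.eventually_const_lt (by norm_num)
  have hz0 : Tendsto z l (𝓝 0) := by
    have := (hz.mul ht')
    rw [one_mul] at this
    refine this.congr' ?_
    filter_upwards [htpos] with i hi
    have : (t i : ℂ) ≠ 0 := by exact_mod_cast hi.ne'
    field_simp
  have hpt : ∀ᶠ i in l, 0 < (z i).re := by
    filter_upwards [htpos, hre] with i hi h
    rw [Complex.div_ofReal_re] at h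
    have := (lt_div_iff₀ hi).mp h
    linarith [mul_pos (show (0:ℝ) < 1/2 by norm_num) hi]
  have hdual : Tendsto (fun i => Complex.exp (-(4 * π ^ 2 / z i))) l (𝓝 0) := by
    rw [tendsto_zero_iff_norm_tendsto_zero]
    simp_rw [Complex.norm_exp]
    refine Real.tendsto_exp_atBot.comp ?_
    have h1 : Tendsto (fun i => ((z i / t i)⁻¹).re) l (𝓝 1) := by
      have := (Complex.continuous_re.tendsto _).comp (hz.inv₀ one_ne_zero)
      simpa using! this
    have h2 : Tendsto (fun i => (t i)⁻¹) l atTop :=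
      tendsto_inv_nhdsGT_zero.comp (tendsto_nhdsWithin_iff.mpr ⟨ht, htpos⟩)
    have h3 := (h2.atTop_mul_pos one_pos h1).const_mul_atTop (r := 4 * π ^ 2) (by positivity)
    refine (tendsto_neg_atTop_atBot.comp h3).congr' ?_
    filter_upwards [htpos, hpt] with i hi hzi
    have hti : (t i : ℂ) ≠ 0 := by exact_mod_cast hi.ne'
    have hzi : z i ≠ 0 := by rintro h; simp [h] at hzi
    have e : -(4 * (π : ℂ) ^ 2 / z i) = ((-(4 * π ^ 2 * (t i)⁻¹) : ℝ) : ℂ) * (z i / t i)⁻¹ := by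
      push_cast; field_simp
    rw [e, Complex.re_ofReal_mul]
    simp only [Function.comp_apply]; ring
  have hE := eulerE_tendsto_zero.comp hdual
  have hnum : Tendsto (fun i => (1 - Complex.exp (-z i)) / t i) l (𝓝 1) := by
    -- The limit is the derivative of `-e ^ (-w)` at `0`, times `lim z / t = 1`.
    have hd : HasDerivAt (fun w : ℂ => -Complex.exp (-w)) 1 0 := by
      have := ((hasDerivAt_neg (0 : ℂ)).cexp).neg
      simpa using! this
    have h1 := hd.tendsto_slope.comp (f := z) (x := l) (tendsto_nhdsWithin_iff.mpr ⟨hz0, by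
      filter_upwards [hpt] with i hi h
      rw [Set.mem_singleton_iff] at h; simp [h] at hi⟩)
    have h2 := h1.mul hz
    rw [one_mul] at h2
    refine h2.congr' ?_
    filter_upwards [hpt] with i hi
    have hzi : z i ≠ 0 := by rintro h; simp [h] at hi
    simp only [Function.comp_apply, slope_def_field]
    simp
    field_simp
    ring
  have hexp : Tendsto (fun i => Complex.exp (-z i / 24)) l (𝓝 1) := by
    have : Tendsto (fun i => -z i / 24) l (𝓝 0) := by simpa using hz0.neg.div_const 24
    simpa using! (Complex.continuous_exp.tendsto 0).comp this
  have hsq : Tendsto (fun i => Complex.sqrt (Complex.I * (z i / t i))) l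
      (𝓝 (Complex.sqrt Complex.I)) := by
    have h1 : Tendsto (fun i => Complex.I * (z i / t i)) l (𝓝 Complex.I) := by
      simpa using hz.const_mul Complex.I
    have : ContinuousAt Complex.sqrt Complex.I :=
      (Complex.differentiableAt_sqrt (by simp [Complex.slitPlane])).continuousAt
    exact this.tendsto.comp h1
  have hmain := (((hnum.mul hexp).mul hsq).div (hE.mul_const (Complex.sqrt Complex.I))
    (by simpa using hsI)).mul_const ((1 / Real.sqrt (2 * π) : ℝ) : ℂ)
  have hlim : (1 * 1 * Complex.sqrt Complex.I / (1 * Complex.sqrt Complex.I)) *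
      ((1 / Real.sqrt (2 * π) : ℝ) : ℂ) = ((1 / Real.sqrt (2 * π) : ℝ) : ℂ) := by
    rw [one_mul, one_mul, div_self hsI, one_mul]
  rw [hlim] at hmain
  refine hmain.congr' ?_
  have hnorm : ∀ᶠ i in l, ‖Complex.exp (-(4 * π ^ 2 / z i))‖ < 1 := by
    have := hdual.norm
    rw [norm_zero] at this
    exact this.eventually_lt_const one_pos
  filter_upwards [htpos, hpt, hnorm] with i hi hzi hn
  have hti : (t i : ℂ) ≠ 0 := by exact_mod_cast hi.ne'
  have hz0 : z i ≠ 0 := by rintro h; simp [h] at hzi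
  have hf := eulerE_functional hzi
  have hE1 := eulerE_ne_zero hn
  have hE2 : eulerE (Complex.exp (-z i)) ≠ 0 := eulerE_ne_zero (by
    rw [Complex.norm_exp, Real.exp_lt_one_iff]; simpa using hzi)
  have e1 : Complex.I * z i / (2 * π) = ((t i / (2 * π) : ℝ) : ℂ) * (Complex.I * (z i / t i)) := by
    push_cast; field_simp
  rw [e1, csqrt_real_mul (by positivity) (mul_ne_zero Complex.I_ne_zero (div_ne_zero hz0 hti)),
    Real.sqrt_div hi.le] at hf
  have hs : (Real.sqrt (t i) : ℂ) ≠ 0 := by exact_mod_cast (Real.sqrt_pos.mpr hi).ne'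
  have hs2 : (Real.sqrt (2 * π) : ℂ) ≠ 0 := by
    exact_mod_cast (Real.sqrt_pos.mpr (by positivity)).ne'
  have e2 : Complex.exp (-(4 * π ^ 2 / z i) / 24) = Complex.exp (-(π ^ 2 / (6 * z i))) := by
    congr 1; field_simp; ring
  rw [e2] at hf
  simp only [genF, Function.comp_apply, Pi.div_apply]
  push_cast at hf ⊢
  have e3 : (t i : ℂ) = Real.sqrt (t i) * Real.sqrt (t i) := by
    exact_mod_cast (Real.mul_self_sqrt hi.le).symm
  generalize Complex.sqrt (Complex.I * (z i / t i)) = S at hf ⊢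
  generalize eulerE (Complex.exp (-(4 * π ^ 2 / z i))) = E' at hf hE1 ⊢
  generalize eulerE (Complex.exp (-z i)) = E at hf hE2 ⊢
  generalize Complex.exp (-z i) = x at hf ⊢
  generalize Complex.exp (-z i / 24) = y at hf ⊢
  generalize Complex.exp (-(π ^ 2 / (6 * z i))) = w at hf ⊢
  generalize (Real.sqrt (2 * π) : ℂ) = r at hf hs2 ⊢
  generalize (Real.sqrt (t i) : ℂ) = u at hf hs e3 ⊢
  rw [e3]
  field_simp at hf ⊢
  linear_combination (-(1 - x)) * hf

/-! ### Domination of the integrand -/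

/-- The gain of a single factor over its value at the modulus: with `d = |w| - Re w ∈ [0, 2]` one has
`|1 - w| ^ 2 = (1 - |w|) ^ 2 + 2 d ≥ (1 - |w|) ^ 2 (1 + 2 d)`, and `1 + 2 d ≥ e ^ (2 d / 5)`. -/
lemma norm_inv_one_sub_le {w : ℂ} (hw : ‖w‖ < 1) :
    ‖(1 - w)⁻¹‖ ≤ (1 - ‖w‖)⁻¹ * Real.exp (-((‖w‖ - w.re) / 5)) := by
  have h0 : 0 ≤ ‖w‖ - w.re := sub_nonneg.mpr (Complex.re_le_norm w)
  have h2 : ‖w‖ - w.re ≤ 2 := by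
    have := (abs_le.mp (Complex.abs_re_le_norm w)).1
    linarith
  have hsq : ‖1 - w‖ ^ 2 = (1 - ‖w‖) ^ 2 + 2 * (‖w‖ - w.re) := by
    have h := Complex.normSq_apply w
    rw [← Complex.sq_norm] at h
    rw [Complex.sq_norm, Complex.normSq_apply]
    simp
    linear_combination -h
  set d := ‖w‖ - w.re
  have hlog : Real.exp (2 * d / 5) ≤ 1 + 2 * d := by
    rw [← Real.le_log_iff_exp_le (by positivity)]
    refine le_trans ?_ (Real.one_sub_inv_le_log_of_pos (by positivity))
    have : 1 - (1 + 2 * d)⁻¹ = 2 * d / (1 + 2 * d) := by field_simp; ring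
    rw [this]
    exact div_le_div_of_nonneg_left (by positivity) (by positivity) (by linarith)
  have hρ : 0 < 1 - ‖w‖ := by linarith
  have hρ1 : (1 - ‖w‖) ^ 2 ≤ 1 := by nlinarith [norm_nonneg w]
  have key : (1 - ‖w‖) * Real.exp (d / 5) ≤ ‖1 - w‖ := by
    refine le_of_sq_le_sq ?_ (norm_nonneg _)
    rw [hsq, mul_pow, ← Real.exp_nat_mul]
    have : ((2 : ℕ) : ℝ) * (d / 5) = 2 * d / 5 := by push_cast; ring
    rw [this]
    nlinarith [mul_le_mul_of_nonneg_left hlog (sq_nonneg (1 - ‖w‖))]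
  rw [norm_inv, Real.exp_neg, ← mul_inv]
  exact inv_anti₀ (by positivity) key

/-- The product of the single-factor gains: the sum of `|q| ^ k - Re q ^ k` over `k ≥ 2` is a
difference of two geometric series. -/
lemma norm_genF_le {q : ℂ} (hq : ‖q‖ < 1) :
    ‖genF q‖ ≤ ‖genF (‖q‖ : ℂ)‖ * Real.exp (-((‖q‖ ^ 2 / (1 - ‖q‖) - (q ^ 2 / (1 - q)).re) / 5)) := by
  set r := ‖q‖ with hr
  have hr0 : 0 ≤ r := norm_nonneg q
  have hrn : ‖(r : ℂ)‖ < 1 := by rw [Complex.norm_real, Real.norm_of_nonneg hr0]; exact hq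
  have hs1 : HasSum (fun k : ℕ => r ^ (k + 2)) (r ^ 2 / (1 - r)) := by
    have := (hasSum_geometric_of_lt_one hr0 hq).mul_right (r ^ 2)
    simpa only [← pow_add, div_eq_inv_mul] using this
  have hs2 : HasSum (fun k : ℕ => (q ^ (k + 2)).re) (q ^ 2 / (1 - q)).re := by
    have := (hasSum_geometric_of_norm_lt_one hq).mul_right (q ^ 2)
    simp only [← pow_add, ← div_eq_inv_mul] at this
    exact Complex.hasSum_re this
  have hd := ((hs1.sub hs2).tendsto_sum_nat.div_const 5).neg
  have hd' := (Real.continuous_exp.tendsto _).comp hd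
  have hR := (tendsto_prod_genF hrn).norm.mul hd'
  refine le_of_tendsto_of_tendsto' (tendsto_prod_genF hq).norm hR fun N => ?_
  simp only [Function.comp_apply, Finset.sum_div, ← Finset.sum_neg_distrib, Real.exp_sum, norm_prod]
  rw [← Finset.prod_mul_distrib]
  refine Finset.prod_le_prod (fun _ _ => norm_nonneg _) fun k _ => ?_
  have hk : ‖q ^ (k + 2)‖ < 1 := by
    rw [norm_pow]; exact pow_lt_one₀ hr0 hq (by omega)
  refine (norm_inv_one_sub_le hk).trans (le_of_eq ?_)
  rw [norm_pow, ← hr]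
  congr 1
  rw [norm_inv, ← Complex.ofReal_pow, ← Complex.ofReal_one, ← Complex.ofReal_sub, Complex.norm_real,
    Real.norm_of_nonneg]
  rw [norm_pow] at hk
  linarith

/-- The exponent of `norm_genF_le` in closed form. The first term on the right is the full sum over
`k ≥ 1`, the second is its `k = 1` term. -/
lemma cosine_gap {q : ℂ} (hq : ‖q‖ < 1) :
    ‖q‖ ^ 2 / (1 - ‖q‖) - (q ^ 2 / (1 - q)).re = (1 + ‖q‖) * (‖q‖ - q.re) /
      ((1 - ‖q‖) * ((1 - ‖q‖) ^ 2 + 2 * (‖q‖ - q.re))) - (‖q‖ - q.re) := by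
  have h1 : 1 - q ≠ 0 := by simpa using one_sub_pow_ne_zero hq 0
  have hsq : ‖q‖ ^ 2 = q.re ^ 2 + q.im ^ 2 := by
    rw [Complex.sq_norm, Complex.normSq_apply]; ring
  have e : q ^ 2 / (1 - q) = q / (1 - q) - q := by field_simp; ring
  have hre : (q / (1 - q)).re = (q.re - ‖q‖ ^ 2) / ((1 - ‖q‖) ^ 2 + 2 * (‖q‖ - q.re)) := by
    have hn : Complex.normSq (1 - q) = (1 - ‖q‖) ^ 2 + 2 * (‖q‖ - q.re) := by
      rw [Complex.normSq_apply]
      simp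
      linear_combination -hsq
    rw [Complex.div_re, hn, ← add_div, hsq]
    congr 1
    simp
    ring
  have hpos : 0 < (1 - ‖q‖) ^ 2 + 2 * (‖q‖ - q.re) := by
    have := Complex.re_le_norm q
    have : 0 < (1 - ‖q‖) ^ 2 := by apply pow_pos; linarith
    linarith
  have hr : 1 - ‖q‖ ≠ 0 := by linarith
  rw [e, Complex.sub_re, hre]
  generalize ‖q‖ = r at *
  have := hpos.ne'
  field_simp
  ring

open Real in
/-- The full sum `∑ (r ^ k - r ^ k cos (k θ))` over `k ≥ 1` at `r = e ^ (-t)` is at least of order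
`θ ^ 2 / (t (t ^ 2 + θ ^ 2))`. -/
lemma gap_lower {t θ : ℝ} (ht : 0 < t) (ht1 : t ≤ 1) (hθ : |θ| ≤ π) :
    θ ^ 2 / (15 * (t * (t ^ 2 + θ ^ 2))) ≤
      (1 + rexp (-t)) * (rexp (-t) - rexp (-t) * cos θ) /
      ((1 - rexp (-t)) * ((1 - rexp (-t)) ^ 2 + 2 * (rexp (-t) - rexp (-t) * cos θ))) := by
  set r := rexp (-t) with hr
  have hr0 : 0 < r := Real.exp_pos _
  have hr1 : r < 1 := by rw [hr, Real.exp_lt_one_iff]; linarith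
  have hrt : 1 - r ≤ t := by
    have := Real.add_one_le_exp (-t)
    linarith
  have hr3 : 1 / 3 ≤ r := by
    have h1 : rexp (-1) ≤ r := Real.exp_le_exp.mpr (by linarith)
    have h2 : rexp 1 * rexp (-1) = 1 := by rw [← Real.exp_add]; simp
    have h3 := Real.exp_one_lt_d9
    have h4 := Real.exp_pos (-1)
    nlinarith
  set d := r - r * cos θ with hd
  have hdl : θ ^ 2 / 15 ≤ d := by
    have hc := Real.cos_le_one_sub_mul_cos_sq hθ
    have h1 : θ ^ 2 / 5 ≤ 1 - cos θ := by
      have hp : π ^ 2 ≤ 10 := by nlinarith [Real.pi_lt_d2, Real.pi_pos]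
      have : 1 / 5 ≤ 2 / π ^ 2 := by
        rw [div_le_div_iff₀ (by norm_num) (by positivity)]; linarith
      nlinarith [sq_nonneg θ]
    have h2 : 0 ≤ 1 - cos θ := by linarith [cos_le_one θ]
    have : d = r * (1 - cos θ) := by rw [hd]; ring
    nlinarith
  have hd0 : 0 ≤ d := le_trans (by positivity) hdl
  have h1r : 0 < 1 - r := by linarith
  calc θ ^ 2 / (15 * (t * (t ^ 2 + θ ^ 2))) ≤ (θ ^ 2 / 15) / (t * (t ^ 2 + 2 * (θ ^ 2 / 15))) := by
        rw [div_div, mul_comm (15:ℝ), mul_comm (15:ℝ)]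
        refine div_le_div_of_nonneg_left (by positivity) (by positivity) ?_
        have : 0 ≤ t * θ ^ 2 := by positivity
        nlinarith
    _ ≤ d / (t * (t ^ 2 + 2 * d)) := by
        rw [div_le_div_iff₀ (by positivity) (by positivity)]
        have : 0 ≤ t ^ 3 * (d - θ ^ 2 / 15) := mul_nonneg (by positivity) (by linarith)
        nlinarith
    _ ≤ _ := by
        refine div_le_div₀ (by positivity) (by nlinarith) ?_ ?_
        · have : 0 < (1 - r) ^ 2 := by positivity
          positivity
        · refine mul_le_mul hrt ?_ (by positivity) ht.le
          have : (1 - r) ^ 2 ≤ t ^ 2 := by gcongr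
          linarith

/-- The dominating function for the rescaled integrand, where `θ = t ^ (3/2) u`. If `t u ^ 2 ≤ 1` the
exponent gained is at least a multiple of `u ^ 2`; otherwise it is at least a multiple of `1 / t`,
which suffices because `t ^ 3 u ^ 2 = θ ^ 2` is bounded. -/
lemma exists_bound : ∃ K : ℝ, ∀ t θ u : ℝ, 0 < t → t ≤ 1 → |θ| ≤ Real.pi →
    θ ^ 2 = t ^ 3 * u ^ 2 →
    ‖genF (Complex.exp (-(t + θ * Complex.I)))‖ ≤ ‖genF (Complex.exp (-t))‖ * (K * (1 + u ^ 2)⁻¹) := by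
  refine ⟨Real.exp (2 / 5) * (120 * 150 ^ 3), fun t θ u ht ht1 hθ hu => ?_⟩
  have hn : ‖Complex.exp (-(t + θ * Complex.I))‖ = Real.exp (-t) := by simp [Complex.norm_exp]
  have hr1 : Real.exp (-t) < 1 := by rw [Real.exp_lt_one_iff]; linarith
  have hr0 := Real.exp_pos (-t)
  have hre : (Complex.exp (-(t + θ * Complex.I))).re = Real.exp (-t) * Real.cos θ := by
    simp [Complex.exp_re]
  have hq : ‖Complex.exp (-(t + θ * Complex.I))‖ < 1 := by rw [hn]; exact hr1
  have h1 := norm_genF_le hq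
  rw [cosine_gap hq, hn, hre] at h1
  have h2 := gap_lower ht ht1 hθ
  have e : ((Real.exp (-t) : ℝ) : ℂ) = Complex.exp (-t) := by push_cast; rfl
  rw [e] at h1
  refine h1.trans (mul_le_mul_of_nonneg_left ?_ (norm_nonneg _))
  set S := (1 + Real.exp (-t)) * (Real.exp (-t) - Real.exp (-t) * Real.cos θ) /
      ((1 - Real.exp (-t)) * ((1 - Real.exp (-t)) ^ 2 +
        2 * (Real.exp (-t) - Real.exp (-t) * Real.cos θ)))
  have hd2 : Real.exp (-t) - Real.exp (-t) * Real.cos θ ≤ 2 := by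
    nlinarith [Real.neg_one_le_cos θ]
  have h3 : Real.exp (-((S - (Real.exp (-t) - Real.exp (-t) * Real.cos θ)) / 5)) ≤
      Real.exp (2 / 5) * Real.exp (-(S / 5)) := by
    rw [← Real.exp_add]; exact Real.exp_le_exp.mpr (by linarith)
  refine h3.trans ?_
  rw [mul_assoc]
  refine mul_le_mul_of_nonneg_left ?_ (Real.exp_pos _).le
  rw [Real.exp_neg, ← div_eq_mul_inv, inv_eq_one_div,
    div_le_div_iff₀ (Real.exp_pos _) (by positivity), one_mul]
  have h4 : u ^ 2 / (15 * (1 + t * u ^ 2)) ≤ S := by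
    refine le_trans (le_of_eq ?_) h2
    rw [hu]; field_simp
  rcases le_or_gt (t * u ^ 2) 1 with hc | hc
  · have h5 : u ^ 2 / 30 ≤ S := by
      refine le_trans ?_ h4
      refine div_le_div_of_nonneg_left (by positivity) (by positivity) (by linarith)
    have := Real.add_one_le_exp (S / 5)
    nlinarith [sq_nonneg u]
  · have h5 : 1 / (30 * t) ≤ S := by
      refine le_trans ?_ h4
      rw [div_le_div_iff₀ (by positivity) (by positivity)]
      nlinarith
    have h6 : 1 / (150 * t) ≤ S / 5 := by
      have : 1 / (150 * t) = 1 / (30 * t) / 5 := by field_simp; norm_num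
      rw [this]; linarith
    have h7 : (1 / (150 * t)) ^ 3 / 6 ≤ Real.exp (S / 5) := by
      refine le_trans ?_ (Real.exp_le_exp.mpr h6)
      have := Real.pow_div_factorial_le_exp (1 / (150 * t)) (by positivity) 3
      simpa [Nat.factorial] using this
    have hu1 : 1 ≤ u ^ 2 := by nlinarith [sq_nonneg u]
    have hpi : t ^ 3 * u ^ 2 ≤ 10 := by
      rw [← hu, ← sq_abs]
      have := Real.pi_lt_d2
      nlinarith [abs_nonneg θ]
    -- `e ^ y ≥ y ^ 3 / 6` at `y = 1 / (150 t)` beats `1 + u ^ 2`, which is at most `20 / t ^ 3`.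
    have h8 : (1 + u ^ 2) * t ^ 3 ≤ 20 := by
      nlinarith [pow_pos ht 3]
    have e9 : 120 * 150 ^ 3 * ((1 / (150 * t)) ^ 3 / 6) = 20 / t ^ 3 := by field_simp; norm_num
    have h10 : 1 + u ^ 2 ≤ 20 / t ^ 3 := by rw [le_div_iff₀ (by positivity)]; exact h8
    linarith

/-! ### The saddle point -/

lemma continuous_genF_exp {t : ℝ} (ht : 0 < t) (s : ℝ) :
    Continuous fun u : ℝ => genF (Complex.exp (-(t + (s * u : ℝ) * Complex.I))) := by
  have hq : ∀ u : ℝ, ‖Complex.exp (-(t + (s * u : ℝ) * Complex.I))‖ < 1 := by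
    intro u
    rw [Complex.norm_exp, Real.exp_lt_one_iff]
    simpa using ht
  have hE : Continuous fun u : ℝ => eulerE (Complex.exp (-(t + (s * u : ℝ) * Complex.I))) := by
    refine continuous_iff_continuousAt.mpr fun u => ?_
    have h := (ModularForm.differentiableOn_tprod_one_sub_pow.differentiableAt
      (Metric.isOpen_ball.mem_nhds (mem_ball_zero_iff.mpr (hq u)))).continuousAt
    have h2 : ContinuousAt (fun u : ℝ => Complex.exp (-(t + (s * u : ℝ) * Complex.I))) u := by
      fun_prop
    exact ContinuousAt.comp (f := fun u : ℝ => Complex.exp (-(t + (s * u : ℝ) * Complex.I)))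
      (g := eulerE) h h2
  exact Continuous.div (by fun_prop) hE fun u => eulerE_ne_zero (hq u)

/-- The integrand of Cauchy's formula on the circle of radius `e ^ (-t)`, divided by its value at angle
`0`, in the variable `u` with angle `θ = s u`, and extended by `0` outside `|θ| ≤ π`. -/
noncomputable def scaled (n : ℕ) (t s u : ℝ) : ℂ :=
  (Set.Ioc (-(Real.pi / s)) (Real.pi / s)).indicator (fun u : ℝ =>
    genF (Complex.exp (-(t + (s * u : ℝ) * Complex.I))) / genF (Complex.exp (-t)) *
      Complex.exp (n * ((s * u : ℝ) * Complex.I))) u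

lemma genF_ne_zero {q : ℂ} (hq : ‖q‖ < 1) : genF q ≠ 0 :=
  div_ne_zero (by simpa using one_sub_pow_ne_zero hq 0) (eulerE_ne_zero hq)

lemma norm_exp_neg_lt {t : ℝ} (ht : 0 < t) : ‖Complex.exp (-(t : ℂ))‖ < 1 := by
  rw [Complex.norm_exp, Real.exp_lt_one_iff]; simpa using ht

lemma integral_scaled (n : ℕ) {t s : ℝ} (ht : 0 < t) (hs : 0 < s) :
    ∫ u, scaled n t s u =
      2 * Real.pi * rp n / (s * (genF (Complex.exp (-t)) * Complex.exp (n * t))) := by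
  have hg := genF_ne_zero (norm_exp_neg_lt ht)
  have hs' : (s : ℂ) ≠ 0 := by exact_mod_cast hs.ne'
  have hle : -(Real.pi / s) ≤ Real.pi / s := by
    have : 0 < Real.pi / s := by positivity
    linarith
  simp only [scaled]
  rw [MeasureTheory.integral_indicator measurableSet_Ioc, ← intervalIntegral.integral_of_le hle]
  have h := intervalIntegral.integral_comp_mul_left (a := -(Real.pi / s)) (b := Real.pi / s)
    (fun θ : ℝ => genF (Complex.exp (-(t + θ * Complex.I))) *
      Complex.exp (n * (t + θ * Complex.I))) hs.ne'
  have e1 : s * (Real.pi / s) = Real.pi := by field_simp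
  rw [mul_neg, e1, rp_integral n ht] at h
  have e2 : ∀ u : ℝ, genF (Complex.exp (-(t + (s * u : ℝ) * Complex.I))) /
      genF (Complex.exp (-t)) * Complex.exp (n * ((s * u : ℝ) * Complex.I)) =
      (genF (Complex.exp (-(t + (s * u : ℝ) * Complex.I))) *
      Complex.exp (n * (t + (s * u : ℝ) * Complex.I))) *
        (genF (Complex.exp (-t)) * Complex.exp (n * t))⁻¹ := by
    intro u
    rw [mul_add, Complex.exp_add]
    have := Complex.exp_ne_zero (n * (t : ℂ))
    field_simp
  simp_rw [e2]
  rw [intervalIntegral.integral_mul_const, h]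
  have := Complex.exp_ne_zero (n * (t : ℂ))
  rw [Complex.real_smul]
  push_cast
  field_simp

section
open Real

/-- The saddle point, i.e. the minimum in `t` of `π ^ 2 / (6 t) + n t`. At `n = 0` this is `0` by the
convention for division by zero. -/
noncomputable def tn (n : ℕ) : ℝ := π / √(6 * n)

/-- The width `t ^ (3/2)` of the saddle, in the angle variable. -/
noncomputable def sn (n : ℕ) : ℝ := tn n * √(tn n)

lemma tn_pos {n : ℕ} (hn : 0 < n) : 0 < tn n := by
  have : (0 : ℝ) < n := by exact_mod_cast hn
  unfold tn; positivity

lemma sn_pos {n : ℕ} (hn : 0 < n) : 0 < sn n := 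
  mul_pos (tn_pos hn) (Real.sqrt_pos.mpr (tn_pos hn))

lemma tn_tendsto : Tendsto tn atTop (𝓝 0) := by
  refine Tendsto.div_atTop tendsto_const_nhds (Real.tendsto_sqrt_atTop.comp ?_)
  exact tendsto_natCast_atTop_atTop.const_mul_atTop (by norm_num)

lemma sn_tendsto : Tendsto sn atTop (𝓝 0) := by
  have := tn_tendsto.mul ((Real.continuous_sqrt.tendsto _).comp tn_tendsto)
  simpa using! this

lemma nat_mul_tn_sq {n : ℕ} (hn : 0 < n) : (n : ℝ) = π ^ 2 / (6 * tn n ^ 2) := by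
  have : (0 : ℝ) < n := by exact_mod_cast hn
  unfold tn
  rw [div_pow, Real.sq_sqrt (by positivity)]
  field_simp

/-- Pointwise limit at the saddle. With `z = t + i s u`, the exponent
`π ^ 2 / 6 (1 / z - 1 / t + (z - t) / t ^ 2)` equals `-(π ^ 2 / 6) u ^ 2 (t / z)`, and `t / z → 1`. -/
lemma tendsto_scaled (u : ℝ) : Tendsto (fun n => scaled n (tn n) (sn n) u) atTop
    (𝓝 (Complex.exp (-(π ^ 2 / 6 : ℝ) * (u : ℂ) ^ 2))) := by
  have hpos : ∀ᶠ n : ℕ in atTop, 0 < n := eventually_gt_atTop 0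
  have htp : ∀ᶠ n : ℕ in atTop, 0 < tn n := hpos.mono fun n hn => tn_pos hn
  set z : ℕ → ℂ := fun n => tn n + (sn n * u : ℝ) * Complex.I with hz
  have hzt : Tendsto (fun n => z n / tn n) atTop (𝓝 1) := by
    have h1 : Tendsto (fun n => √(tn n)) atTop (𝓝 0) := by
      simpa using! (Real.continuous_sqrt.tendsto _).comp tn_tendsto
    have h2 : Tendsto (fun n => (1 : ℂ) + ((√(tn n) * u : ℝ) : ℂ) * Complex.I) atTop
        (𝓝 (1 + ((0 * u : ℝ) : ℂ) * Complex.I)) :=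
      (((Complex.continuous_ofReal.tendsto _).comp (h1.mul_const u)).mul_const _).const_add _
    simp only [zero_mul, Complex.ofReal_zero, add_zero] at h2
    refine h2.congr' ?_
    filter_upwards [htp] with n hn
    have : (tn n : ℂ) ≠ 0 := by exact_mod_cast hn.ne'
    simp only [hz, sn]
    push_cast
    field_simp
  have h1 := tendsto_genF tn_tendsto htp hzt
  have h2 := tendsto_genF (z := fun n => (tn n : ℂ)) tn_tendsto htp (by
    refine tendsto_const_nhds.congr' ?_
    filter_upwards [htp] with n hn
    have : (tn n : ℂ) ≠ 0 := by exact_mod_cast hn.ne'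
    rw [div_self this])
  have hne : ((1 / √(2 * π) : ℝ) : ℂ) ≠ 0 := by
    have : 0 < 1 / √(2 * π) := by positivity
    exact_mod_cast this.ne'
  have h3 := h1.div h2 hne
  rw [div_self hne] at h3
  have h4 : Tendsto (fun n => Complex.exp (-(π ^ 2 / 6 : ℝ) * (u : ℂ) ^ 2 * (z n / tn n)⁻¹)) atTop
      (𝓝 (Complex.exp (-(π ^ 2 / 6 : ℝ) * (u : ℂ) ^ 2))) := by
    have := (hzt.inv₀ one_ne_zero).const_mul (-((π ^ 2 / 6 : ℝ) : ℂ) * (u : ℂ) ^ 2)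
    rw [inv_one, mul_one] at this
    exact (Complex.continuous_exp.tendsto _).comp this
  have h5 := h3.mul h4
  rw [one_mul] at h5
  refine h5.congr' ?_
  have hu : ∀ᶠ n : ℕ in atTop, |u| < π / sn n := by
    have : Tendsto (fun n => π / sn n) atTop atTop := by
      have h : Tendsto (fun n => (sn n)⁻¹) atTop atTop :=
        tendsto_inv_nhdsGT_zero.comp (tendsto_nhdsWithin_iff.mpr
          ⟨sn_tendsto, hpos.mono fun n hn => sn_pos hn⟩)
      simpa [div_eq_mul_inv] using h.const_mul_atTop pi_pos
    exact this.eventually_gt_atTop _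
  filter_upwards [hpos, hu] with n hn hun
  have ht := tn_pos hn
  have htC : (tn n : ℂ) ≠ 0 := by exact_mod_cast ht.ne'
  have hsC : ((tn n * √(tn n) : ℝ) : ℂ) ≠ 0 := by exact_mod_cast (sn_pos hn).ne'
  have hzn : z n ≠ 0 := by
    intro h
    have := congrArg Complex.re h
    simp [hz] at this
    exact ht.ne' this
  have hmem : u ∈ Set.Ioc (-(π / sn n)) (π / sn n) :=
    ⟨(abs_lt.mp hun).1, (abs_lt.mp hun).2.le⟩
  rw [scaled, Set.indicator_of_mem hmem]
  simp only [Pi.div_apply]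
  change _ = genF (Complex.exp (-(z n))) / _ * _
  have hg := genF_ne_zero (norm_exp_neg_lt ht)
  have hzI : ((sn n * u : ℝ) : ℂ) * Complex.I = z n - tn n := by simp [hz]
  have hn2 : (n : ℂ) = π ^ 2 / (6 * tn n ^ 2) := by
    have := nat_mul_tn_sq hn
    exact_mod_cast congrArg (fun x : ℝ => (x : ℂ)) this
  have hsq : (z n - tn n) ^ 2 = -(tn n ^ 3 * u ^ 2) := by
    rw [← hzI, mul_pow, Complex.I_sq]
    have : (sn n * u) ^ 2 = tn n ^ 3 * u ^ 2 := by
      rw [sn, mul_pow, mul_pow, Real.sq_sqrt ht.le]; ring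
    rw [← Complex.ofReal_pow, this]; push_cast; ring
  have hexp : Complex.exp (n * ((sn n * u : ℝ) * Complex.I)) =
      Complex.exp (-(π ^ 2 / (6 * z n))) / Complex.exp (-(π ^ 2 / (6 * tn n))) *
      Complex.exp (-(π ^ 2 / 6 : ℝ) * (u : ℂ) ^ 2 * (z n / tn n)⁻¹) := by
    rw [← Complex.exp_sub, ← Complex.exp_add, hzI, hn2]
    congr 1
    push_cast
    field_simp
    linear_combination hsq
  rw [hexp]
  have := Complex.exp_ne_zero (-((π : ℂ) ^ 2 / (6 * tn n)))
  field_simp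

lemma tendsto_integral_scaled : Tendsto (fun n => ∫ u, scaled n (tn n) (sn n) u) atTop
    (𝓝 ((√(6 / π) : ℝ) : ℂ)) := by
  obtain ⟨K, hK⟩ := exists_bound
  have hlim : ((√(6 / π) : ℝ) : ℂ) = ∫ u : ℝ, Complex.exp (-(π ^ 2 / 6 : ℝ) * (u : ℂ) ^ 2) := by
    have h := integral_gaussian (π ^ 2 / 6)
    have e : π / (π ^ 2 / 6) = 6 / π := by field_simp
    rw [e] at h
    rw [← h, ← integral_complex_ofReal]
    refine MeasureTheory.integral_congr_ae (.of_forall fun u => ?_)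
    push_cast; rfl
  rw [hlim]
  have hpos : ∀ᶠ n : ℕ in atTop, 0 < n := eventually_gt_atTop 0
  have ht1 : ∀ᶠ n : ℕ in atTop, tn n ≤ 1 := tn_tendsto.eventually_le_const one_pos
  refine MeasureTheory.tendsto_integral_filter_of_dominated_convergence
    (fun u : ℝ => |K| * (1 + u ^ 2)⁻¹) ?_ ?_ (integrable_inv_one_add_sq.const_mul _)
    (.of_forall tendsto_scaled)
  · filter_upwards [hpos] with n hn
    refine MeasureTheory.AEStronglyMeasurable.indicator ?_ measurableSet_Ioc
    have h := continuous_genF_exp (tn_pos hn) (sn n)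
    exact ((h.div_const _).mul (by fun_prop)).aestronglyMeasurable
  · filter_upwards [hpos, ht1] with n hn hn1
    refine .of_forall fun u => ?_
    rw [scaled]
    by_cases hu : u ∈ Set.Ioc (-(π / sn n)) (π / sn n)
    swap
    · rw [Set.indicator_of_notMem hu, norm_zero]; positivity
    rw [Set.indicator_of_mem hu]
    have ht := tn_pos hn
    have hs := sn_pos hn
    have hθ : |sn n * u| ≤ π := by
      rw [abs_mul, abs_of_pos hs]
      have := abs_le.mpr ⟨hu.1.le, hu.2⟩
      rw [le_div_iff₀ hs] at this
      linarith
    have hsq : (sn n * u) ^ 2 = tn n ^ 3 * u ^ 2 := by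
      rw [sn, mul_pow, mul_pow, Real.sq_sqrt ht.le]; ring
    have hb := hK (tn n) (sn n * u) u ht hn1 hθ hsq
    have hg := norm_pos_iff.mpr (genF_ne_zero (norm_exp_neg_lt ht))
    rw [norm_mul, norm_div]
    have hone : ‖Complex.exp (n * ((sn n * u : ℝ) * Complex.I))‖ = 1 := by
      simp [Complex.norm_exp]
    rw [hone, mul_one, div_le_iff₀ hg]
    refine hb.trans ?_
    rw [mul_comm]
    have : K ≤ |K| := le_abs_self K
    gcongr

/-- The asymptotic formula for partitions without parts equal to `1`. -/
lemma rp_asymptotic : Tendsto (fun p : ℕ => (rp p : ℝ) /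
        (π * √2 / (24 * (p : ℝ) ^ ((3 : ℝ) / 2)) * rexp (π * (2 * (p : ℝ) / 3) ^ ((1 : ℝ) / 2))))
      atTop (𝓝 1) := by
  have hpos : ∀ᶠ n : ℕ in atTop, 0 < n := eventually_gt_atTop 0
  have htp : ∀ᶠ n : ℕ in atTop, 0 < tn n := hpos.mono fun n hn => tn_pos hn
  have h2 := tendsto_genF (z := fun n => (tn n : ℂ)) tn_tendsto htp (by
    refine tendsto_const_nhds.congr' ?_
    filter_upwards [htp] with n hn
    have : (tn n : ℂ) ≠ 0 := by exact_mod_cast hn.ne'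
    rw [div_self this])
  have h3 := (tendsto_integral_scaled.mul h2).mul_const
    (((√(2 * π) / √(6 / π) : ℝ) : ℂ))
  have hc : ((√(6 / π) : ℝ) : ℂ) * ((1 / √(2 * π) : ℝ) : ℂ) * ((√(2 * π) / √(6 / π) : ℝ) : ℂ) = 1 := by
    rw [← Complex.ofReal_mul, ← Complex.ofReal_mul]
    have h1 : √(6 / π) ≠ 0 := by positivity
    have h2 : √(2 * π) ≠ 0 := by positivity
    have : √(6 / π) * (1 / √(2 * π)) * (√(2 * π) / √(6 / π)) = 1 := by field_simp
    rw [this, Complex.ofReal_one]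
  rw [hc] at h3
  have h4 := (Complex.continuous_re.tendsto _).comp h3
  rw [Complex.one_re] at h4
  refine h4.congr' ?_
  filter_upwards [hpos] with n hn
  have ht := tn_pos hn
  have hs := sn_pos hn
  have hnR : (0 : ℝ) < n := by exact_mod_cast hn
  simp only [Function.comp_apply]
  rw [integral_scaled n ht hs]
  have hg := genF_ne_zero (norm_exp_neg_lt ht)
  have hn2 := nat_mul_tn_sq hn
  have hnt : (n : ℝ) * tn n = π ^ 2 / (6 * tn n) := by rw [hn2]; field_simp
  have hexp : π * (2 * (n : ℝ) / 3) ^ ((1 : ℝ) / 2) = n * tn n + π ^ 2 / (6 * tn n) := by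
    rw [hnt, ← Real.sqrt_eq_rpow]
    have : 2 * (n : ℝ) / 3 = (π / (3 * tn n)) ^ 2 := by rw [hn2]; field_simp; norm_num
    rw [this, Real.sqrt_sq (by positivity)]
    field_simp; norm_num
  have hpow : (n : ℝ) ^ ((3 : ℝ) / 2) = (π / (√6 * tn n)) ^ 3 := by
    have : (n : ℝ) = (π / (√6 * tn n)) ^ (2 : ℝ) := by
      rw [Real.rpow_two, div_pow, mul_pow, Real.sq_sqrt (by norm_num)]; exact hn2
    rw [this, ← Real.rpow_mul (by positivity)]
    norm_num
  rw [hexp, hpow]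
  have hreal : (2 * π * rp n / (sn n * (genF (Complex.exp (-tn n)) * Complex.exp (n * tn n))) *
      (genF (Complex.exp (-tn n)) * Complex.exp (-(π ^ 2 / (6 * tn n))) /
        (tn n * √(tn n) : ℝ)) * (√(2 * π) / √(6 / π) : ℝ) : ℂ) =
      ((2 * π * rp n / (sn n * rexp (n * tn n)) * (rexp (-(π ^ 2 / (6 * tn n))) /
        (tn n * √(tn n))) * (√(2 * π) / √(6 / π)) : ℝ) : ℂ) := by
    push_cast
    field_simp
  rw [hreal, Complex.ofReal_re]
  rw [Real.exp_neg, Real.exp_add]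
  have e1 := Real.exp_ne_zero (n * tn n)
  have e2 := Real.exp_ne_zero (π ^ 2 / (6 * tn n))
  have hss : sn n * (tn n * √(tn n)) = tn n ^ 3 := by
    rw [sn]
    linear_combination tn n ^ 2 * Real.mul_self_sqrt ht.le
  rw [Real.sqrt_div (by norm_num), Real.sqrt_mul (by norm_num)]
  have h6 : √6 ≠ 0 := by positivity
  have h66 : √6 ^ 2 = 6 := Real.sq_sqrt (by norm_num)
  have hp : √π ^ 2 = π := Real.sq_sqrt pi_pos.le
  have h22 : √2 ^ 2 = 2 := Real.sq_sqrt (by norm_num)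
  have : 2 * π * rp n / (sn n * rexp (n * tn n)) * ((rexp (π ^ 2 / (6 * tn n)))⁻¹ /
        (tn n * √(tn n))) * (√2 * √π / (√6 / √π)) =
      2 * π * rp n * √2 * √π ^ 2 / ((sn n * (tn n * √(tn n))) * rexp (n * tn n) *
        rexp (π ^ 2 / (6 * tn n)) * √6) := by
    field_simp
  rw [this, hss, hp]
  have hpi := pi_pos.ne'
  field_simp
  rw [h22, h66]
  ring

end

end

open Real Filter in
/-- `μ_{2,p}(full) ∼ (π√2 / (24 p^{3/2})) · exp(π (2p/3)^{1/2})`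
as `p → ∞`. -/
theorem stmt3 :
    Tendsto (fun p : ℕ =>
      (muFull 2 p : ℝ) /
        (Real.pi * Real.sqrt 2 / (24 * (p : ℝ) ^ ((3 : ℝ) / 2)) *
          Real.exp (Real.pi * (2 * (p : ℝ) / 3) ^ ((1 : ℝ) / 2))))
      atTop (nhds 1) := by
  simp_rw [muFull_two]
  exact rp_asymptotic
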